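/- Extension theorem for a finite protoset: Let P be a finite nonempty family of compact subsets of ℝ², each of which is the closure of its (nonempty) interior. A patch is a family of sets, each obtained from some member of P by applying an isometry of ℝ², whose members have pairwise disjoint interiors. Suppose that for every R > 0 there exists a patch whose union contains the closed ball of radius R centered at the origin. Then there exists a patch whose union is all of ℝ², i.e., the protoset P admits a tiling of the plane. -/

import Mathlib

/-- A patch over a protoset `P`: a family of placed tiles, each the image of a prototile
under an isometry of the plane, with pairwise disjoint interiors. -/
def IsPatch (P : Set (Set (EuclideanSpace ℝ (Fin 2))))
    (Q : Set (Set (EuclideanSpace ℝ (Fin 2)))) : Prop :=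
  (∀ q ∈ Q, ∃ p ∈ P, ∃ f : EuclideanSpace ℝ (Fin 2) ≃ᵢ EuclideanSpace ℝ (Fin 2),
      q = f '' p) ∧
  Q.Pairwise fun a b => Disjoint (interior a) (interior b)

open Filter Topology in
lemma tiling_compact_lim {X : Type*} [TopologicalSpace X] (U : Ultrafilter ℕ) {K : Set X}
    (hK : IsCompact K) (s : ℕ → X) (hs : ∀ᶠ n in (U : Filter ℕ), s n ∈ K) :
    ∃ y ∈ K, Tendsto s (U : Filter ℕ) (𝓝 y) := by
  obtain ⟨y, hy, h⟩ := hK.ultrafilter_le_nhds (U.map s) (by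
    rw [Filter.le_principal_iff]; exact hs)
  exact ⟨y, hy, h⟩

open Filter Topology in
/-- Pointwise limits of isometries along converging arguments. -/
lemma tiling_joint {X : Type*} [PseudoMetricSpace X] {l : Filter ℕ} {F : ℕ → X ≃ᵢ X} {u : ℕ → X}
    {a b : X} (hF : Tendsto (fun n => F n a) l (𝓝 b)) (hu : Tendsto u l (𝓝 a)) :
    Tendsto (fun n => F n (u n)) l (𝓝 b) := by
  rw [tendsto_iff_dist_tendsto_zero] at *
  have := hu.add hF
  rw [add_zero] at this
  refine squeeze_zero (fun _ => dist_nonneg) (fun n => ?_) this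
  calc dist (F n (u n)) b ≤ dist (F n (u n)) (F n a) + dist (F n a) b := dist_triangle _ _ _
    _ = _ := by rw [(F n).dist_eq]

open Filter Topology in
lemma tiling_sub {X : Type*} [MetricSpace X] (U : Ultrafilter ℕ) {F G : ℕ → X ≃ᵢ X}
    {f g : X → X} {p q : Set X} (hq : IsCompact q)
    (hF : ∀ x, Tendsto (fun n => F n x) U (𝓝 (f x)))
    (hG : ∀ x, Tendsto (fun n => G n x) U (𝓝 (g x)))
    (h : ∀ᶠ n in (U : Filter ℕ), F n '' p = G n '' q) : f '' p ⊆ g '' q := by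
  rintro _ ⟨u, hu, rfl⟩
  obtain ⟨v, hv, hlim⟩ := tiling_compact_lim U hq (fun n => (G n).symm (F n u)) (by
    filter_upwards [h] with n hn
    have : F n u ∈ G n '' q := hn ▸ Set.mem_image_of_mem _ hu
    obtain ⟨w, hw, e⟩ := this
    rw [← e]; simpa using hw)
  refine ⟨v, hv, ?_⟩
  have h1 := tiling_joint (hG v) hlim
  simp only [IsometryEquiv.apply_symm_apply] at h1
  exact tendsto_nhds_unique h1 (hF u)

open Filter Topology in
lemma tiling_limit_isom {X : Type*} [MetricSpace X] [ProperSpace X] (U : Ultrafilter ℕ)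
    {F : ℕ → X ≃ᵢ X} {p : Set X} (hp : IsCompact p) (x : X)
    (h : ∀ᶠ n in (U : Filter ℕ), x ∈ F n '' p) :
    ∃ f : X ≃ᵢ X, (∀ z, Tendsto (fun n => F n z) U (𝓝 (f z))) ∧ x ∈ f '' p := by
  obtain ⟨y, hy, hylim⟩ := tiling_compact_lim U hp (fun n => (F n).symm x) (by
    filter_upwards [h] with n hn
    obtain ⟨w, hw, e⟩ := hn
    rw [← e]; simpa using hw)
  have hyb : ∀ᶠ n in (U : Filter ℕ), dist ((F n).symm x) y < 1 :=
    hylim (Metric.ball_mem_nhds y one_pos)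
  have hf : ∀ z, ∃ w, Tendsto (fun n => F n z) U (𝓝 w) := by
    intro z
    obtain ⟨w, -, hw⟩ := tiling_compact_lim U (isCompact_closedBall x (dist z y + 1))
      (fun n => F n z) (by
        filter_upwards [hyb] with n hn
        rw [Metric.mem_closedBall]
        have e : dist (F n z) x = dist z ((F n).symm x) := by
          rw [← (F n).dist_eq z, IsometryEquiv.apply_symm_apply]
        have := dist_triangle_right z ((F n).symm x) y
        linarith)
    exact ⟨w, hw⟩
  have hg : ∀ z, ∃ w, Tendsto (fun n => (F n).symm z) U (𝓝 w) := by
    intro z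
    obtain ⟨w, -, hw⟩ := tiling_compact_lim U (isCompact_closedBall y (dist z x + 1))
      (fun n => (F n).symm z) (by
        filter_upwards [hyb] with n hn
        rw [Metric.mem_closedBall]
        have e : dist ((F n).symm z) ((F n).symm x) = dist z x := (F n).symm.dist_eq z x
        have := dist_triangle ((F n).symm z) ((F n).symm x) y
        linarith)
    exact ⟨w, hw⟩
  choose f hf using hf
  choose g hg using hg
  have hfg : ∀ z, f (g z) = z := by
    intro z
    have h1 := tiling_joint (hf (g z)) (hg z)
    simp only [IsometryEquiv.apply_symm_apply] at h1
    exact tendsto_nhds_unique h1 tendsto_const_nhds |>.symm ▸ rfl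
  have hiso : Isometry f := by
    refine Isometry.of_dist_eq fun a b => ?_
    have h1 := (hf a).dist (hf b)
    simp only [IsometryEquiv.dist_eq] at h1
    exact tendsto_nhds_unique h1 tendsto_const_nhds
  refine ⟨IsometryEquiv.mk' f g hfg hiso, hf, y, hy, ?_⟩
  have h1 := tiling_joint (hf y) hylim
  simp only [IsometryEquiv.apply_symm_apply] at h1
  exact tendsto_nhds_unique h1 tendsto_const_nhds

open Filter Topology in
lemma tiling_near {X : Type*} [MetricSpace X] {l : Filter ℕ} {F : ℕ → X ≃ᵢ X} {f : X ≃ᵢ X}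
    {p : Set X} (hF : ∀ x, Tendsto (fun n => F n x) l (𝓝 (f x))) {z : X}
    (hz : z ∈ interior (f '' p)) : ∀ᶠ n in l, z ∈ interior (F n '' p) := by
  have e : ∀ g : X ≃ᵢ X, interior (g '' p) = g '' interior p := fun g =>
    (g.toHomeomorph.image_interior p).symm
  rw [e] at hz
  obtain ⟨u, hu, rfl⟩ := hz
  obtain ⟨r, hr, hb⟩ := Metric.isOpen_iff.1 isOpen_interior u hu
  filter_upwards [hF u (Metric.ball_mem_nhds _ hr)] with n hn
  rw [e]
  refine ⟨(F n).symm (f u), hb ?_, by simp⟩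
  have hn' : dist (F n u) (f u) < r := hn
  rw [Metric.mem_ball, ← (F n).dist_eq, IsometryEquiv.apply_symm_apply, dist_comm]
  exact hn'

open Filter Topology in
/-- Extension theorem: if a finite nonempty protoset of compact sets, each the closure of its
nonempty interior, admits patches covering arbitrarily large closed balls about the origin,
then it admits a tiling of the whole plane. -/
theorem protoset_admits_tiling_of_arbitrarily_large_patches
    (P : Set (Set (EuclideanSpace ℝ (Fin 2))))
    (hfin : P.Finite) (hne : P.Nonempty)
    (hcompact : ∀ p ∈ P, IsCompact p)
    (hclos : ∀ p ∈ P, p = closure (interior p))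
    (hint : ∀ p ∈ P, (interior p).Nonempty)
    (hbig : ∀ R : ℝ, 0 < R → ∃ Q, IsPatch P Q ∧ Metric.closedBall 0 R ⊆ ⋃₀ Q) :
    ∃ Q, IsPatch P Q ∧ ⋃₀ Q = Set.univ := by
  have hb : ∀ n : ℕ, ∃ Q, IsPatch P Q ∧ Metric.closedBall 0 ((n : ℝ) + 1) ⊆ ⋃₀ Q :=
    fun n => hbig _ (by positivity)
  choose Q hQ hcov using hb
  let U : Ultrafilter ℕ := hyperfilter ℕ
  have hU : (U : Filter ℕ) ≤ atTop := by
    rw [← Nat.cofinite_eq_atTop]; exact hyperfilter_le_cofinite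
  refine ⟨{q | ∃ p ∈ P, ∃ F : ℕ → EuclideanSpace ℝ (Fin 2) ≃ᵢ EuclideanSpace ℝ (Fin 2),
    ∃ f : EuclideanSpace ℝ (Fin 2) ≃ᵢ EuclideanSpace ℝ (Fin 2),
    (∀ᶠ n in (U : Filter ℕ), F n '' p ∈ Q n) ∧
    (∀ x, Tendsto (fun n => F n x) U (𝓝 (f x))) ∧ q = f '' p}, ⟨?_, ?_⟩, ?_⟩
  · rintro q ⟨p, hp, F, f, -, -, rfl⟩
    exact ⟨p, hp, f, rfl⟩
  · rintro _ ⟨p, hp, F, f, hFQ, hF, rfl⟩ _ ⟨p', hp', G, g, hGQ, hG, rfl⟩ hab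
    rw [Set.disjoint_left]
    intro z hz hz'
    apply hab
    have heq : ∀ᶠ n in (U : Filter ℕ), F n '' p = G n '' p' := by
      filter_upwards [hFQ, hGQ, tiling_near hF hz, tiling_near hG hz'] with n h1 h2 h3 h4
      by_contra hne
      exact Set.disjoint_left.1 ((hQ n).2 h1 h2 hne) h3 h4
    exact (tiling_sub U (hcompact p' hp') hF hG heq).antisymm
      (tiling_sub U (hcompact p hp) hG hF (heq.mono fun _ h => h.symm))
  · refine Set.eq_univ_of_forall fun x => ?_
    have hex : ∀ᶠ n in (U : Filter ℕ), ∃ p ∈ P,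
        ∃ F : EuclideanSpace ℝ (Fin 2) ≃ᵢ EuclideanSpace ℝ (Fin 2),
          F '' p ∈ Q n ∧ x ∈ F '' p := by
      apply hU
      obtain ⟨N, hN⟩ := exists_nat_ge ‖x‖
      filter_upwards [eventually_ge_atTop N] with n hn
      have hn' : (N : ℝ) ≤ n := by exact_mod_cast hn
      obtain ⟨q, hq, hxq⟩ := hcov n (show x ∈ Metric.closedBall 0 ((n : ℝ) + 1) by
        rw [mem_closedBall_zero_iff]; linarith)
      obtain ⟨p, hp, F, rfl⟩ := (hQ n).1 q hq
      exact ⟨p, hp, F, hq, hxq⟩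
    have hex2 : ∃ p ∈ P, ∀ᶠ n in (U : Filter ℕ),
        ∃ F : EuclideanSpace ℝ (Fin 2) ≃ᵢ EuclideanSpace ℝ (Fin 2),
          F '' p ∈ Q n ∧ x ∈ F '' p := by
      have := (Ultrafilter.finite_biUnion_mem_iff (f := U) hfin (s := fun p => {n |
        ∃ F : EuclideanSpace ℝ (Fin 2) ≃ᵢ EuclideanSpace ℝ (Fin 2),
          F '' p ∈ Q n ∧ x ∈ F '' p})).1 (by
            filter_upwards [hex] with n hn
            simpa using hn)
      exact this
    obtain ⟨p, hp, h⟩ := hex2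
    obtain ⟨F, hF⟩ := h.choice
    obtain ⟨f, hf, hx⟩ := tiling_limit_isom U (hcompact p hp) x (hF.mono fun _ h => h.2)
    exact ⟨f '' p, ⟨p, hp, F, f, hF.mono fun _ h => h.1, hf, rfl⟩, hx⟩
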